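/- The characteristic function of the noncentral gamma density gₐ(x; y) is ĝₐ(t; y) = (1−it)^{−α} exp(ity/(1−it)), and consequently lim_{ε→0⁺} ĝₐ(εt; ε⁻¹y) = exp(ity) for every t ∈ ℝ; hence Gₐ(ε⁻¹x; ε⁻¹y) → 1 if x > y and → 0 if x < y as ε → 0⁺. -/

import Mathlib

open MeasureTheory Filter

/-- The noncentral gamma density `g_α(x;y) = e^{−y} g_α(x) ₀F₁(α; xy)`. -/
noncomputable def ncGammaPdf (α y x : ℝ) : ℝ :=
  Real.exp (-y) * (x ^ (α - 1) * Real.exp (-x) / Real.Gamma α) *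
    ∑' k : ℕ, (x * y) ^ k * Real.Gamma α / (Real.Gamma (α + k) * (Nat.factorial k))

/-!
The noncentral gamma law is the Poisson(`y`) mixture of the gamma laws of shapes `α + k`. The mgf
of a gamma law of rate `r` is a Gamma integral, and analytic continuation to `re z < r` turns
it into the characteristic function. With `w = 1 - it`, the `k`-th component contributes
`w ^ (-α) * w⁻¹ ^ k`, and the Poisson generating function sums these to
`w ^ (-α) * exp (y * (w⁻¹ - 1))`, where `w⁻¹ - 1 = it / w`.

The rescaled characteristic functions converge to that of the point mass at `y`, so Lévy's
continuity theorem gives weak convergence, and the portmanteau theorem evaluates the limit on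
`(-∞, x]`, whose frontier misses `y` exactly when `x ≠ y`.
-/

open ProbabilityTheory
open scoped NNReal Nat Topology

lemma measurable_gammaPDF (a r : ℝ) : Measurable (gammaPDF a r) :=
  (measurable_gammaPDFReal a r).ennreal_ofReal

lemma gammaMeasure_eq_withDensity_restrict_Ioi (a r : ℝ) :
    gammaMeasure a r = (volume.restrict (Set.Ioi 0)).withDensity (gammaPDF a r) := by
  rw [Measure.restrict_congr_set Ioi_ae_eq_Ici, ← withDensity_indicator measurableSet_Ici,
    gammaMeasure, Set.indicator_eq_self.2]
  intro x hx
  contrapose! hx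
  simpa using gammaPDF_of_neg (not_le.1 hx)

lemma integral_gammaMeasure {E : Type*} [NormedAddCommGroup E] [NormedSpace ℝ E] {a r : ℝ}
    (ha : 0 < a) (hr : 0 < r) (f : ℝ → E) :
    ∫ x, f x ∂gammaMeasure a r = ∫ x in Set.Ioi 0, gammaPDFReal a r x • f x := by
  rw [gammaMeasure_eq_withDensity_restrict_Ioi, integral_withDensity_eq_integral_toReal_smul
    (measurable_gammaPDF a r) (ae_of_all _ fun _ => ENNReal.ofReal_lt_top)]
  simp only [gammaPDF, ENNReal.toReal_ofReal (gammaPDFReal_nonneg ha hr _)]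

lemma mgf_gammaMeasure {a r t : ℝ} (ha : 0 < a) (hr : 0 < r) (ht : t < r) :
    mgf id (gammaMeasure a r) t = (1 - t / r) ^ (-a) := by
  have hrt : 0 < r - t := sub_pos.2 ht
  calc mgf id (gammaMeasure a r) t
      = ∫ x in Set.Ioi 0, r ^ a / Real.Gamma a * (x ^ (a - 1) * Real.exp (-((r - t) * x))) := by
        rw [mgf, integral_gammaMeasure ha hr]
        refine setIntegral_congr_fun measurableSet_Ioi fun x (hx : 0 < x) => ?_
        have hexp : Real.exp (-((r - t) * x)) = Real.exp (-(r * x)) * Real.exp (t * x) := by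
          rw [← Real.exp_add]
          ring_nf
        simp only [gammaPDFReal, if_pos hx.le, smul_eq_mul, id_eq, hexp]
        ring
    _ = (r / (r - t)) ^ a := by
        rw [integral_const_mul, Real.integral_rpow_mul_exp_neg_mul_Ioi ha hrt,
          Real.div_rpow hr.le hrt.le, Real.div_rpow zero_le_one hrt.le, Real.one_rpow]
        have := (Real.Gamma_pos_of_pos ha).ne'
        field_simp
    _ = (1 - t / r) ^ (-a) := by
        rw [one_sub_div hr.ne', Real.rpow_neg (by positivity), ← Real.inv_rpow (by positivity),
          inv_div]

lemma Iio_subset_integrableExpSet_gammaMeasure {a r : ℝ} (ha : 0 < a) (hr : 0 < r) :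
    Set.Iio r ⊆ integrableExpSet id (gammaMeasure a r) := by
  intro t (ht : t < r)
  -- A nonintegrable function has integral `0`, so it is enough that the mgf is positive.
  refine Integrable.of_integral_ne_zero (ne_of_gt ?_)
  change 0 < mgf id (gammaMeasure a r) t
  rw [mgf_gammaMeasure ha hr ht]
  have : 0 < 1 - t / r := sub_pos.2 ((div_lt_one hr).2 ht)
  positivity

lemma complexMGF_gammaMeasure {a r : ℝ} (ha : 0 < a) (hr : 0 < r) {z : ℂ} (hz : z.re < r) :
    complexMGF id (gammaMeasure a r) z = (1 - z / r) ^ (-a : ℂ) := by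
  have h_left : AnalyticOnNhd ℂ (complexMGF id (gammaMeasure a r)) {z | z.re < r} :=
    analyticOnNhd_complexMGF.mono fun _ hz =>
      interior_maximal (Iio_subset_integrableExpSet_gammaMeasure ha hr) isOpen_Iio hz
  have h_right : AnalyticOnNhd ℂ (fun z : ℂ => (1 - z / r) ^ (-a : ℂ)) {z | z.re < r} := by
    refine DifferentiableOn.analyticOnNhd (fun z (hz : z.re < r) => ?_)
      (isOpen_Iio.preimage Complex.continuous_re)
    refine (DifferentiableAt.cpow (by fun_prop) (by fun_prop) (.inl ?_)).differentiableWithinAt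
    simpa using (div_lt_one hr).2 hz
  have h_real {t : ℝ} (ht : t < r) :
      complexMGF id (gammaMeasure a r) t = (1 - t / r : ℂ) ^ (-a : ℂ) := by
    rw [complexMGF_ofReal, mgf_gammaMeasure ha hr ht,
      Complex.ofReal_cpow (sub_nonneg.2 ((div_le_one hr).2 ht.le))]
    push_cast
    rfl
  have h_tendsto : Tendsto ((↑) : ℝ → ℂ) (𝓝[≠] 0) (𝓝[≠] 0) :=
    Complex.continuous_ofReal.continuousWithinAt.tendsto_nhdsWithin fun t ht => by simpa using ht
  refine h_left.eqOn_of_preconnected_of_frequently_eq h_right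
    (convex_halfSpace_re_lt r).isPreconnected (z₀ := 0) (by simpa using hr) ?_ hz
  have h_eventually : ∀ᶠ t : ℝ in 𝓝[≠] 0, t < r := nhdsWithin_le_nhds (Iio_mem_nhds hr)
  exact h_tendsto.frequently (h_eventually.mono fun t ht => h_real ht).frequently

lemma charFun_gammaMeasure {a r : ℝ} (ha : 0 < a) (hr : 0 < r) (t : ℝ) :
    charFun (gammaMeasure a r) t = (1 - t * Complex.I / r) ^ (-a : ℂ) := by
  rw [← complexMGF_id_mul_I, complexMGF_gammaMeasure ha hr (by simpa using hr)]

lemma integral_pow_poissonMeasure (r : ℝ≥0) (z : ℂ) :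
    ∫ n, z ^ n ∂poissonMeasure r = Complex.exp (r * (z - 1)) := by
  have h_term (n : ℕ) : (Real.exp (-r) * r ^ n / n ! : ℝ) • z ^ n =
      Complex.exp (-r) * ((r * z) ^ n / n !) := by
    simp only [Complex.real_smul]
    push_cast
    ring
  rw [integral_poissonMeasure, tsum_congr h_term, tsum_mul_left,
    (NormedSpace.expSeries_div_hasSum_exp (r * z : ℂ)).tsum_eq, ← Complex.exp_eq_exp_ℂ,
    ← Complex.exp_add]
  ring_nf

lemma tendsto_measure_of_tendsto_charFun {ι E : Type*} [NormedAddCommGroup E]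
    [InnerProductSpace ℝ E] [FiniteDimensional ℝ E] [MeasurableSpace E] [BorelSpace E]
    {l : Filter ι} [l.IsCountablyGenerated] {μ : ι → Measure E} {ν : Measure E}
    [IsProbabilityMeasure ν] (hμ : ∀ᶠ i in l, IsProbabilityMeasure (μ i))
    (h : ∀ t, Tendsto (fun i => charFun (μ i) t) l (𝓝 (charFun ν t)))
    {s : Set E} (hs : ν (frontier s) = 0) :
    Tendsto (fun i => μ i s) l (𝓝 (ν s)) := by
  classical
  let P (i : ι) : ProbabilityMeasure E :=
    if hi : IsProbabilityMeasure (μ i) then ⟨μ i, hi⟩ else ⟨ν, inferInstance⟩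
  have hP : ∀ᶠ i in l, (P i : Measure E) = μ i := by
    filter_upwards [hμ] with i hi
    exact congrArg Subtype.val (dif_pos hi)
  have h_charFun (t : E) : Tendsto (fun i => charFun (P i : Measure E) t) l (𝓝 (charFun ν t)) := by
    refine (h t).congr' ?_
    filter_upwards [hP] with i hi
    rw [hi]
  have h_weak : Tendsto P l (𝓝 ⟨ν, inferInstance⟩) :=
    tendsto_of_seq_tendsto fun u hu =>
      ProbabilityMeasure.tendsto_of_tendsto_charFun fun t => (h_charFun t).comp hu
  refine (ProbabilityMeasure.tendsto_measure_of_null_frontier_of_tendsto' h_weak hs).congr' ?_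
  filter_upwards [hP] with i hi
  rw [hi]

section NCGamma

variable {α y : ℝ}

lemma summable_pow_div_Gamma_add_mul_factorial (α z : ℝ) :
    Summable fun k : ℕ => z ^ k / (Real.Gamma (α + k) * k !) := by
  refine (Real.summable_pow_div_factorial |z|).of_norm_bounded_eventually_nat ?_
  have h_atTop : Tendsto (fun k : ℕ => α + (k : ℝ)) atTop atTop :=
    tendsto_atTop_add_const_left _ _ tendsto_natCast_atTop_atTop
  filter_upwards [h_atTop.eventually_ge_atTop 2] with k hk
  have hΓ : 1 ≤ Real.Gamma (α + k) := by
    simpa using Real.Gamma_strictMonoOn_Ici.monotoneOn Set.self_mem_Ici hk hk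
  rw [norm_div, norm_pow, Real.norm_eq_abs, norm_mul, Real.norm_natCast,
    Real.norm_of_nonneg (zero_le_one.trans hΓ)]
  gcongr
  exact le_mul_of_one_le_left (by positivity) hΓ

lemma measurable_ncGammaPdf (α y : ℝ) : Measurable (ncGammaPdf α y) := by
  unfold ncGammaPdf
  fun_prop

lemma hasSum_ncGammaPdf (hα : 0 < α) (y : ℝ) {x : ℝ} (hx : 0 < x) :
    HasSum (fun k : ℕ => Real.exp (-y) * y ^ k / k ! * gammaPDFReal (α + k) 1 x)
      (ncGammaPdf α y x) := by
  have h_summable : Summable fun k : ℕ =>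
      (x * y) ^ k * Real.Gamma α / (Real.Gamma (α + k) * k !) := by
    simpa only [div_mul_eq_mul_div] using
      (summable_pow_div_Gamma_add_mul_factorial α (x * y)).mul_right (Real.Gamma α)
  have h_term (k : ℕ) : Real.exp (-y) * y ^ k / k ! * gammaPDFReal (α + k) 1 x =
      Real.exp (-y) * (x ^ (α - 1) * Real.exp (-x) / Real.Gamma α) *
        ((x * y) ^ k * Real.Gamma α / (Real.Gamma (α + k) * k !)) := by
    have hΓ := (Real.Gamma_pos_of_pos hα).ne'
    simp only [gammaPDFReal, if_pos hx.le]
    rw [add_sub_right_comm, Real.rpow_add_natCast hx.ne', mul_pow, Real.one_rpow, one_mul]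
    field_simp
  simp only [h_term]
  exact h_summable.hasSum.mul_left _

lemma ncGammaPdf_nonneg (hα : 0 < α) (hy : 0 ≤ y) {x : ℝ} (hx : 0 < x) :
    0 ≤ ncGammaPdf α y x :=
  (hasSum_ncGammaPdf hα y hx).nonneg fun k =>
    mul_nonneg (by positivity) (gammaPDFReal_nonneg (by positivity) one_pos x)

/-- The noncentral gamma distribution with shape `α` and noncentrality `y`. The restriction to
`(0, ∞)` is explicit because `ncGammaPdf` carries no indicator. -/
noncomputable def ncGammaMeasure (α y : ℝ) : Measure ℝ :=
  (volume.restrict (Set.Ioi 0)).withDensity fun x => ENNReal.ofReal (ncGammaPdf α y x)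

lemma setIntegral_ncGammaMeasure {E : Type*} [NormedAddCommGroup E] [NormedSpace ℝ E]
    (hα : 0 < α) (hy : 0 ≤ y) (f : ℝ → E) {s : Set ℝ} (hs : MeasurableSet s) :
    ∫ x in s, f x ∂ncGammaMeasure α y = ∫ x in s ∩ Set.Ioi 0, ncGammaPdf α y x • f x := by
  rw [ncGammaMeasure, setIntegral_withDensity_eq_setIntegral_toReal_smul
    (measurable_ncGammaPdf α y).ennreal_ofReal (ae_of_all _ fun _ => ENNReal.ofReal_lt_top) _ hs,
    Measure.restrict_restrict hs]
  refine setIntegral_congr_fun (hs.inter measurableSet_Ioi) fun x hx => ?_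
  simp only [ENNReal.toReal_ofReal (ncGammaPdf_nonneg hα hy hx.2)]

lemma charFun_ncGammaMeasure_eq_integral (hα : 0 < α) (hy : 0 ≤ y) (t : ℝ) :
    charFun (ncGammaMeasure α y) t =
      ∫ x in Set.Ioi (0 : ℝ), Complex.exp (Complex.I * t * x) * (ncGammaPdf α y x : ℂ) := by
  rw [charFun_apply_real, ← setIntegral_univ, setIntegral_ncGammaMeasure hα hy _ .univ,
    Set.univ_inter]
  congr! 2 with x
  rw [Complex.real_smul, mul_comm]
  ring_nf

lemma measureReal_ncGammaMeasure_Iic (hα : 0 < α) (hy : 0 ≤ y) (x : ℝ) :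
    (ncGammaMeasure α y).real (Set.Iic x) = ∫ u in Set.Ioc 0 x, ncGammaPdf α y u := by
  rw [← setIntegral_one_eq_measureReal, setIntegral_ncGammaMeasure hα hy _ measurableSet_Iic,
    Set.inter_comm, Set.Ioi_inter_Iic]
  simp only [smul_eq_mul, mul_one]

lemma ncGammaMeasure_eq_sum (hα : 0 < α) (y : ℝ≥0) :
    ncGammaMeasure α y =
      Measure.sum fun k : ℕ => poissonMeasure y {k} • gammaMeasure (α + k) 1 := by
  have h_density : (fun x => ENNReal.ofReal (ncGammaPdf α y x)) =ᵐ[volume.restrict (Set.Ioi 0)]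
      ∑' k : ℕ, poissonMeasure y {k} • gammaPDF (α + k) 1 := by
    filter_upwards [ae_restrict_mem measurableSet_Ioi] with x (hx : 0 < x)
    have h_sum := hasSum_ncGammaPdf hα y hx
    rw [← h_sum.tsum_eq, ENNReal.ofReal_tsum_of_nonneg _ h_sum.summable, ENNReal.tsum_apply]
    · refine tsum_congr fun k => ?_
      rw [ENNReal.ofReal_mul (by positivity), poissonMeasure_singleton]
      rfl
    · exact fun k => mul_nonneg (by positivity) (gammaPDFReal_nonneg (by positivity) one_pos x)
  rw [ncGammaMeasure, withDensity_congr_ae h_density,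
    withDensity_tsum fun k => (measurable_gammaPDF _ _).const_smul _]
  congr! 2 with k
  rw [withDensity_smul _ (measurable_gammaPDF _ _), gammaMeasure_eq_withDensity_restrict_Ioi]

lemma isProbabilityMeasure_ncGammaMeasure (hα : 0 < α) (hy : 0 ≤ y) :
    IsProbabilityMeasure (ncGammaMeasure α y) := by
  lift y to ℝ≥0 using hy
  have (k : ℕ) : IsProbabilityMeasure (gammaMeasure (α + k) 1) :=
    isProbabilityMeasure_gammaMeasure (by positivity) one_pos
  constructor
  simp only [ncGammaMeasure_eq_sum hα, Measure.sum_apply _ MeasurableSet.univ, Measure.smul_apply,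
    measure_univ, smul_eq_mul, mul_one]
  simpa using (poissonMeasure y).tsum_indicator_apply_singleton Set.univ .univ

theorem charFun_ncGammaMeasure (hα : 0 < α) (hy : 0 ≤ y) (t : ℝ) :
    charFun (ncGammaMeasure α y) t = (1 - Complex.I * t) ^ (-α : ℂ) *
      Complex.exp (Complex.I * t * y / (1 - Complex.I * t)) := by
  have := isProbabilityMeasure_ncGammaMeasure hα hy
  lift y to ℝ≥0 using hy
  set w : ℂ := 1 - Complex.I * t with hw
  have hw0 : w ≠ 0 := fun h => by simpa [hw] using congrArg Complex.re h
  have h_gamma (k : ℕ) : charFun (gammaMeasure (α + k) 1) t = w ^ (-α : ℂ) * w⁻¹ ^ k := by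
    rw [charFun_gammaMeasure (by positivity) one_pos, Complex.ofReal_one, div_one, mul_comm (t : ℂ),
      ← hw, Complex.ofReal_add, Complex.ofReal_natCast, neg_add, Complex.cpow_add _ _ hw0,
      Complex.cpow_neg _ (k : ℂ), Complex.cpow_natCast, inv_pow]
  have h_integrable : Integrable (fun x : ℝ => Complex.exp (t * x * Complex.I))
      (ncGammaMeasure α y) := by
    refine Integrable.of_bound (by fun_prop) 1 (ae_of_all _ fun x => ?_)
    rw [← Complex.ofReal_mul, Complex.norm_exp_ofReal_mul_I]
  rw [ncGammaMeasure_eq_sum hα] at h_integrable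
  calc charFun (ncGammaMeasure α y) t
      = ∑' k : ℕ, (poissonMeasure y).real {k} • charFun (gammaMeasure (α + k) 1) t := by
        rw [ncGammaMeasure_eq_sum hα, charFun_apply_real, integral_sum_measure h_integrable]
        simp only [integral_smul_measure, charFun_apply_real, measureReal_def]
    _ = ∫ k, w ^ (-α : ℂ) * w⁻¹ ^ k ∂poissonMeasure y := by
        simp only [h_gamma, integral_poissonMeasure, poissonMeasure_real_singleton]
    _ = w ^ (-α : ℂ) * Complex.exp (y * (w⁻¹ - 1)) := by
        rw [integral_const_mul, integral_pow_poissonMeasure]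
    _ = w ^ (-α : ℂ) * Complex.exp (Complex.I * t * y / w) := by
        congr 2
        field_simp
        rw [hw]
        ring

end NCGamma

lemma tendsto_rescaled_charFun_ncGamma (α y : ℂ) (t : ℝ) :
    Tendsto (fun ε : ℝ => (1 - Complex.I * (ε * t)) ^ (-α) *
        Complex.exp (Complex.I * (ε * t) * (ε⁻¹ * y) / (1 - Complex.I * (ε * t))))
      (𝓝[>] 0) (𝓝 (Complex.exp (Complex.I * t * y))) := by
  have h_cont : ContinuousAt (fun ε : ℝ => (1 - Complex.I * (ε * t)) ^ (-α) *
      Complex.exp (Complex.I * t * y / (1 - Complex.I * (ε * t)))) 0 := by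
    refine ContinuousAt.mul (ContinuousAt.cpow (by fun_prop) (by fun_prop) (by simp)) ?_
    exact (ContinuousAt.div (by fun_prop) (by fun_prop) (by simp)).cexp
  have h_lim := h_cont.tendsto.mono_left (nhdsWithin_le_nhds (s := Set.Ioi 0))
  simp only [Complex.ofReal_zero, zero_mul, mul_zero, sub_zero, Complex.one_cpow, one_mul,
    div_one] at h_lim
  refine h_lim.congr' ?_
  filter_upwards [self_mem_nhdsWithin] with ε (hε : 0 < ε)
  have hε' : (ε : ℂ) ≠ 0 := Complex.ofReal_ne_zero.2 hε.ne'
  rw [Complex.ofReal_inv]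
  congr 3
  field_simp

theorem tendsto_ncGammaMeasure_map_mul_dirac {α y : ℝ} (hα : 0 < α) (hy : 0 ≤ y) {s : Set ℝ}
    (hs : y ∉ frontier s) :
    Tendsto (fun ε : ℝ => (ncGammaMeasure α (ε⁻¹ * y)).map (ε * ·) s) (𝓝[>] 0)
      (𝓝 (Measure.dirac y s)) := by
  refine tendsto_measure_of_tendsto_charFun ?_ (fun t => ?_) ?_
  · filter_upwards [self_mem_nhdsWithin] with ε (hε : 0 < ε)
    have := isProbabilityMeasure_ncGammaMeasure hα (y := ε⁻¹ * y) (by positivity)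
    exact Measure.isProbabilityMeasure_map (by fun_prop)
  · have h_dirac : charFun (Measure.dirac y) t = Complex.exp (Complex.I * t * y) := by
      rw [charFun_dirac, real_inner_comm]
      simp only [RCLike.inner_apply, conj_trivial, Complex.ofReal_mul]
      ring_nf
    rw [h_dirac]
    refine (tendsto_rescaled_charFun_ncGamma α y t).congr' ?_
    filter_upwards [self_mem_nhdsWithin] with ε (hε : 0 < ε)
    rw [charFun_map_mul, charFun_ncGammaMeasure hα (by positivity)]
    push_cast
    rfl
  · rw [Measure.dirac_apply' _ isClosed_frontier.measurableSet, Set.indicator_of_notMem hs]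

theorem tendsto_setIntegral_ncGammaPdf {α x y : ℝ} (hα : 0 < α) (hy : 0 ≤ y) (hxy : x ≠ y) :
    Tendsto (fun ε : ℝ => ∫ u in Set.Ioc 0 (ε⁻¹ * x), ncGammaPdf α (ε⁻¹ * y) u) (𝓝[>] 0)
      (𝓝 ((Measure.dirac y).real (Set.Iic x))) := by
  have h_measure := tendsto_ncGammaMeasure_map_mul_dirac hα hy (s := Set.Iic x)
    (by simpa using hxy.symm)
  refine ((ENNReal.tendsto_toReal (measure_ne_top _ _)).comp h_measure).congr' ?_
  filter_upwards [self_mem_nhdsWithin] with ε (hε : 0 < ε)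
  rw [Function.comp_apply, Measure.map_apply (by fun_prop) measurableSet_Iic,
    Set.preimage_const_mul_Iic₀ _ hε, ← measureReal_def,
    measureReal_ncGammaMeasure_Iic hα (by positivity), div_eq_inv_mul]

/-- The characteristic function of the noncentral gamma density is
`(1−it)^{−α} exp(ity/(1−it))`; hence `ĝ_α(εt; ε⁻¹y) → e^{ity}` as `ε → 0⁺`, and the
rescaled cdf `G_α(ε⁻¹x; ε⁻¹y)` tends to `1` for `x > y` and to `0` for `x < y`. -/
theorem stmt_17 (α : ℝ) (hα : 0 < α) (y : ℝ) (hy : 0 ≤ y) :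
    (∀ t : ℝ,
      (∫ x in Set.Ioi (0:ℝ), Complex.exp (Complex.I * t * x) * (ncGammaPdf α y x : ℂ)) =
        (1 - Complex.I * t) ^ (-(α:ℂ)) *
          Complex.exp (Complex.I * t * y / (1 - Complex.I * t))) ∧
    (∀ t : ℝ,
      Tendsto (fun ε : ℝ =>
          (1 - Complex.I * (ε * t)) ^ (-(α:ℂ)) *
            Complex.exp (Complex.I * (ε * t) * (ε⁻¹ * y) / (1 - Complex.I * (ε * t))))
        (nhdsWithin 0 (Set.Ioi 0)) (nhds (Complex.exp (Complex.I * t * y)))) ∧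
    (∀ x : ℝ, y < x →
      Tendsto (fun ε : ℝ => ∫ u in Set.Ioc (0:ℝ) (ε⁻¹ * x), ncGammaPdf α (ε⁻¹ * y) u)
        (nhdsWithin 0 (Set.Ioi 0)) (nhds 1)) ∧
    (∀ x : ℝ, 0 < x → x < y →
      Tendsto (fun ε : ℝ => ∫ u in Set.Ioc (0:ℝ) (ε⁻¹ * x), ncGammaPdf α (ε⁻¹ * y) u)
        (nhdsWithin 0 (Set.Ioi 0)) (nhds 0)) := by
  refine ⟨fun t => ?_, tendsto_rescaled_charFun_ncGamma α y, fun x hx => ?_, fun x _ hx => ?_⟩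
  · rw [← charFun_ncGammaMeasure_eq_integral hα hy, charFun_ncGammaMeasure hα hy]
  · simpa [measureReal_def, hx.le] using tendsto_setIntegral_ncGammaPdf hα hy hx.ne'
  · simpa [measureReal_def, hx.not_ge] using tendsto_setIntegral_ncGammaPdf hα hy hx.ne
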